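/- ∫_{ℝ²} ((|x|²-1)/(1+|x|²)³) · w₀(x) dx = π³/18 - 7π/12, where w₀ is the radial function w₀(r) = -ln(1+r²) + 2r²/(1+r²) - (ln(1+r²))²/2 + ((1-r²)/(1+r²)) ∫₁^{1+r²} (ln t)/(1-t) dt. -/

import Mathlib

/-!
In polar coordinates the integral is `2π ∫₀^∞ r (r² - 1) / (1 + r²)³ W0 r dr`, and the substitution
`1 + r² = eᵘ` (`integral_radial`) turns it into `π ∫₀^∞ J(u) du`, where, with `q = e⁻ᵘ` and
`M(u) = ∫₁^{eᵘ} log t / (1 - t) dt`,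
`J(u) = (q - 2 q²) (-u + 2 (1 - q) - u² / 2 + (2 q - 1) M(u))`.

The factor multiplying `M` in `J` is `-q (1 - 2 q)²`, which has an elementary primitive, and
`M'(u) = -u / (1 - q)` is elementary as well. Integrating by parts therefore removes `M`, and partial
fractions leave elementary terms plus `(1/3) u q / (1 - q)`. Thus `J - (1/3) u / (eᵘ - 1)` has the
explicit primitive `expPrimitive` (`hasDerivAt_expPrimitive`), whose value is `7/12` at `0` and which
vanishes at infinity. The remaining term is the Bose–Einstein integral
`∫₀^∞ u / (eᵘ - 1) du = ζ(2) = π² / 6` (`integral_bose`). Integrability of `J` and decay of the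
primitive both come from the bound `|M(u)| ≤ u + u² / 2` (`abs_dilogExp_le`).
-/


open MeasureTheory Real

noncomputable section

abbrev E2 := EuclideanSpace ℝ (Fin 2)

/-- The radial function `w₀`. -/
def W0 (r : ℝ) : ℝ :=
  -Real.log (1 + r^2) + 2*r^2/(1+r^2) - (Real.log (1+r^2))^2/2
    + ((1-r^2)/(1+r^2)) * ∫ t in (1:ℝ)..(1+r^2), Real.log t / (1-t)

open Set Filter Topology

/-- The dilogarithm-type function `u ↦ ∫₁^{eᵘ} log t / (1 - t) dt`, which is the integral in `W0 r`
at `1 + r² = eᵘ`. -/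
def dilogExp (u : ℝ) : ℝ := ∫ t in (1:ℝ)..(exp u), Real.log t / (1-t)

lemma norm_log_div_le {t : ℝ} (ht : 1 < t) : ‖Real.log t / (1-t)‖ ≤ (1 + Real.log t) / t := by
  have h0 : 0 < Real.log t := Real.log_pos ht
  have h1 : Real.log t ≤ t - 1 := Real.log_le_sub_one_of_pos (by linarith)
  rw [norm_div, Real.norm_of_nonneg h0.le, Real.norm_of_nonpos (by linarith),
    div_le_div_iff₀ (by linarith) (by linarith)]
  nlinarith

lemma continuousOn_majorant {s : ℝ} (hs : 1 ≤ s) :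
    ContinuousOn (fun t : ℝ => (1 + Real.log t) / t) (uIcc 1 s) := by
  intro t ht
  rw [uIcc_of_le hs] at ht
  have : t ≠ 0 := by linarith [ht.1]
  exact ContinuousAt.continuousWithinAt (by fun_prop (disch := assumption))

lemma integral_majorant {s : ℝ} (hs : 1 ≤ s) :
    ∫ t in (1:ℝ)..s, (1 + Real.log t) / t = Real.log s + Real.log s ^ 2 / 2 := by
  rw [intervalIntegral.integral_eq_sub_of_hasDerivAt
    (f := fun t => Real.log t + Real.log t ^ 2 / 2) _ (continuousOn_majorant hs).intervalIntegrable]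
  · simp
  · intro t ht
    rw [uIcc_of_le hs] at ht
    have : t ≠ 0 := by linarith [ht.1]
    have h := Real.hasDerivAt_log this
    convert! h.add ((h.pow 2).div_const 2) using 1
    field_simp
    push_cast
    ring

lemma intervalIntegrable_log_div {s : ℝ} (hs : 1 ≤ s) :
    IntervalIntegrable (fun t : ℝ => Real.log t / (1-t)) volume 1 s := by
  refine (continuousOn_majorant hs).intervalIntegrable.mono_fun'
    (Measurable.aestronglyMeasurable (by fun_prop)) ?_
  rw [EventuallyLE, ae_restrict_iff' measurableSet_uIoc]
  refine ae_of_all _ fun t ht => norm_log_div_le ?_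
  rw [uIoc_of_le hs] at ht
  exact ht.1

/-- `log t / (t - 1) ≤ (1 + log t) / t` integrates to polynomial growth of `dilogExp`. -/
lemma abs_dilogExp_le {u : ℝ} (hu : 0 ≤ u) : |dilogExp u| ≤ u + u ^ 2 / 2 := by
  have hs : 1 ≤ exp u := Real.one_le_exp hu
  have := intervalIntegral.norm_integral_le_of_norm_le (μ := volume) hs
    (f := fun t => Real.log t / (1-t)) (g := fun t => (1 + Real.log t) / t)
    (ae_of_all _ fun t ht => norm_log_div_le ht.1) (continuousOn_majorant hs).intervalIntegrable
  rw [integral_majorant hs, Real.log_exp] at this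
  exact this

lemma hasDerivAt_dilogExp {u : ℝ} (hu : 0 < u) :
    HasDerivAt dilogExp (-(u / (1 - exp (-u)))) u := by
  have hs : 1 < exp u := Real.one_lt_exp_iff.2 hu
  have hc : ContinuousAt (fun t : ℝ => Real.log t / (1-t)) (exp u) := by
    have h1 : exp u ≠ 0 := (exp_pos u).ne'
    have h2 : 1 - exp u ≠ 0 := by linarith
    fun_prop (disch := assumption)
  have h := intervalIntegral.integral_hasDerivAt_right (intervalIntegrable_log_div hs.le)
    (Measurable.stronglyMeasurable (by fun_prop)).stronglyMeasurableAtFilter hc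
  have h' := h.comp u (Real.hasDerivAt_exp u)
  convert! h' using 1
  have h2 : 1 - exp u ≠ 0 := by linarith
  have h3 : exp u - 1 ≠ 0 := by linarith
  rw [Real.log_exp, Real.exp_neg]
  field_simp
  rw [show 1 - exp u = -(exp u - 1) by ring, neg_neg]

lemma continuousOn_dilogExp : ContinuousOn dilogExp (Ici 0) := by
  intro u hu
  rcases (mem_Ici.1 hu).eq_or_lt with rfl | h
  · have h0 : dilogExp 0 = 0 := by simp [dilogExp]
    rw [ContinuousWithinAt, h0]
    refine squeeze_zero_norm' (a := fun u => u + u ^ 2 / 2) ?_ ?_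
    · filter_upwards [self_mem_nhdsWithin] with u hu using abs_dilogExp_le hu
    · have : Continuous fun u : ℝ => u + u ^ 2 / 2 := by fun_prop
      simpa using (this.tendsto 0).mono_left nhdsWithin_le_nhds
  · exact (hasDerivAt_dilogExp h).continuousAt.continuousWithinAt

lemma integrable_pow_mul_exp (k : ℕ) :
    IntegrableOn (fun u : ℝ => u ^ k * exp (-u)) (Ioi 0) := by
  have := Real.GammaIntegral_convergent (s := k + 1) (by positivity)
  refine this.congr_fun (fun u _ => ?_) measurableSet_Ioi
  simp [mul_comm]

lemma integrable_poly_mul_exp (a b c : ℝ) :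
    IntegrableOn (fun u : ℝ => (a + b * u + c * u ^ 2) * exp (-u)) (Ioi 0) := by
  have h : Integrable _ (volume.restrict (Ioi (0:ℝ))) := (((integrable_pow_mul_exp 0).const_mul a).add
    ((integrable_pow_mul_exp 1).const_mul b)).add ((integrable_pow_mul_exp 2).const_mul c)
  refine IntegrableOn.congr_fun h (fun u _ => ?_) measurableSet_Ioi
  simp only [Pi.add_apply]
  ring

lemma tendsto_poly_mul_exp (a b c : ℝ) :
    Tendsto (fun u : ℝ => (a + b * u + c * u ^ 2) * exp (-u)) atTop (𝓝 0) := by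
  have h (k : ℕ) := Real.tendsto_pow_mul_exp_neg_atTop_nhds_zero k
  have := (((h 0).const_mul a).add ((h 1).const_mul b)).add ((h 2).const_mul c)
  simp only [mul_zero, add_zero] at this
  refine this.congr fun u => ?_
  ring

lemma integral_mul_exp_neg_mul (n : ℕ) :
    ∫ u in Ioi (0:ℝ), u * exp (-((n + 1 : ℝ) * u)) = 1 / ((n : ℝ) + 1) ^ 2 := by
  have h := Real.integral_rpow_mul_exp_neg_mul_Ioi (a := 2) (r := n + 1) two_pos (by positivity)
  rw [Real.Gamma_two, mul_one, Real.rpow_two, one_div_pow] at h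
  rw [← h]
  refine setIntegral_congr_fun measurableSet_Ioi fun u _ => ?_
  norm_num

/-- The Bose–Einstein integral `∫₀^∞ u / (eᵘ - 1) du = ζ(2)`, by expanding the geometric series. -/
lemma integral_bose :
    ∫ u in Ioi (0:ℝ), u * exp (-u) / (1 - exp (-u)) = π ^ 2 / 6 := by
  have hint (n : ℕ) : IntegrableOn (fun u : ℝ => u * exp (-((n + 1 : ℝ) * u))) (Ioi 0) := by
    refine .of_integral_ne_zero ?_
    rw [integral_mul_exp_neg_mul]
    positivity
  have hz : HasSum (fun n : ℕ => 1 / ((n : ℝ) + 1) ^ 2) (π ^ 2 / 6) := by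
    simpa using (hasSum_nat_add_iff' 1).2 hasSum_zeta_two
  have hn (n : ℕ) : ∫ u in Ioi (0:ℝ), ‖u * exp (-((n + 1 : ℝ) * u))‖
      = 1 / ((n : ℝ) + 1) ^ 2 := by
    rw [← integral_mul_exp_neg_mul]
    refine setIntegral_congr_fun measurableSet_Ioi fun u hu => ?_
    have : 0 < u := hu
    exact Real.norm_of_nonneg (by positivity)
  have key := hasSum_integral_of_summable_integral_norm hint (by simpa only [hn] using hz.summable)
  simp only [integral_mul_exp_neg_mul] at key
  rw [← key.unique hz]
  refine setIntegral_congr_fun measurableSet_Ioi fun u hu => ?_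
  have hu' : 0 < u := hu
  have hg := (hasSum_geometric_of_lt_one (exp_pos (-u)).le
    (Real.exp_lt_one_iff.2 (by linarith))).mul_left (u * exp (-u))
  simp only [div_eq_mul_inv]
  rw [← hg.tsum_eq]
  refine tsum_congr fun n => ?_
  rw [← Real.exp_nat_mul, mul_assoc, ← Real.exp_add]
  ring_nf

lemma integrable_bose :
    IntegrableOn (fun u : ℝ => u * exp (-u) / (1 - exp (-u))) (Ioi 0) :=
  .of_integral_ne_zero (by rw [integral_bose]; positivity)

/-- Twice the integrand after the substitution `1 + r² = eᵘ`. -/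
def expIntegrand (u : ℝ) : ℝ :=
  (exp (-u) - 2 * exp (-u) ^ 2) *
    (-u + 2 * (1 - exp (-u)) - u ^ 2 / 2 + (2 * exp (-u) - 1) * dilogExp u)

/-- A primitive of `expIntegrand u - (1/3) u / (eᵘ - 1)`, found by integrating the `dilogExp` term
by parts; `-q + 2 q² - 4/3 q³` with `q = e⁻ᵘ` is a primitive of `q (1 - 2 q)²`. -/
def expPrimitive (u : ℝ) : ℝ :=
  -2 * exp (-u) + 3 * exp (-u) ^ 2 - 4 / 3 * exp (-u) ^ 3
    + (exp (-u) ^ 2 - exp (-u)) * (-u / 3 - u ^ 2 / 2)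
    + (exp (-u) - exp (-u) ^ 2 / 2) * (1 / 3 + u)
    + (exp (-u) - exp (-u) ^ 2 / 4)
    - (-exp (-u) + 2 * exp (-u) ^ 2 - 4 / 3 * exp (-u) ^ 3) * dilogExp u

lemma exp_neg_mem {u : ℝ} (hu : 0 < u) : 0 < exp (-u) ∧ exp (-u) < 1 :=
  ⟨exp_pos _, Real.exp_lt_one_iff.2 (by linarith)⟩

lemma hasDerivAt_expPrimitive {u : ℝ} (hu : 0 < u) :
    HasDerivAt expPrimitive
      (expIntegrand u - 1 / 3 * (u * exp (-u) / (1 - exp (-u)))) u := by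
  have hq : HasDerivAt (fun u : ℝ => exp (-u)) (-exp (-u)) u := by
    simpa using (hasDerivAt_neg u).exp
  have hM := hasDerivAt_dilogExp hu
  have hi := hasDerivAt_id' u
  have h1 : 1 - exp (-u) ≠ 0 := by linarith [(exp_neg_mem hu).2]
  have := (((((hq.const_mul (-2)).add ((hq.pow 2).const_mul 3)).sub
    ((hq.pow 3).const_mul (4 / 3))).add
    (((hq.pow 2).sub hq).mul ((hi.neg.div_const 3).sub ((hi.pow 2).div_const 2)))).add
    ((hq.sub ((hq.pow 2).div_const 2)).mul (hi.const_add (1 / 3)))).add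
    (hq.sub ((hq.pow 2).div_const 4))
  have := this.sub (((hq.neg.add ((hq.pow 2).const_mul 2)).sub
    ((hq.pow 3).const_mul (4 / 3))).mul hM)
  convert! this using 1
  simp only [expIntegrand, Pi.add_apply, Pi.sub_apply, Pi.neg_apply, Pi.pow_apply]
  field_simp
  push_cast
  ring

lemma integrable_expIntegrand : IntegrableOn expIntegrand (Ioi 0) := by
  refine (integrable_poly_mul_exp 2 2 1).mono' ?_ ?_
  · refine ContinuousOn.aestronglyMeasurable ?_ measurableSet_Ioi
    have := continuousOn_dilogExp.mono Ioi_subset_Ici_self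
    unfold expIntegrand
    fun_prop
  · rw [ae_restrict_iff' measurableSet_Ioi]
    refine ae_of_all _ fun u (hu : 0 < u) => ?_
    obtain ⟨h0, h1⟩ := exp_neg_mem hu
    have hM := abs_le.1 (abs_dilogExp_le hu.le)
    have hM' := abs_dilogExp_le hu.le
    set q := exp (-u) with hq
    have e1 : |q - 2 * q ^ 2| ≤ q := abs_le.2 ⟨by nlinarith, by nlinarith⟩
    have e2 : |(2 * q - 1) * dilogExp u| ≤ u + u ^ 2 / 2 := by
      rw [abs_mul]
      have : |2 * q - 1| ≤ 1 := abs_le.2 ⟨by linarith, by linarith⟩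
      nlinarith [abs_nonneg (dilogExp u), abs_nonneg (2 * q - 1)]
    have e2' := abs_le.1 e2
    have e3 : |-u + 2 * (1 - q) - u ^ 2 / 2 + (2 * q - 1) * dilogExp u|
        ≤ 2 + 2 * u + 1 * u ^ 2 := abs_le.2 ⟨by nlinarith, by nlinarith⟩
    rw [expIntegrand, Real.norm_eq_abs, abs_mul, mul_comm]
    exact mul_le_mul e3 e1 (abs_nonneg _) (by positivity)

lemma tendsto_expPrimitive : Tendsto expPrimitive atTop (𝓝 0) := by
  refine squeeze_zero_norm' ?_ (tendsto_poly_mul_exp 20 20 20)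
  filter_upwards [eventually_gt_atTop 0] with u hu
  obtain ⟨h0, h1⟩ := exp_neg_mem hu
  have hM := abs_dilogExp_le hu.le
  have hfac : expPrimitive u = (-2 + 3 * exp (-u) - 4 / 3 * exp (-u) ^ 2
    + (exp (-u) - 1) * (-u / 3 - u ^ 2 / 2)
    + (1 - exp (-u) / 2) * (1 / 3 + u)
    + (1 - exp (-u) / 4)
    - (-1 + 2 * exp (-u) - 4 / 3 * exp (-u) ^ 2) * dilogExp u) * exp (-u) := by
    rw [expPrimitive]; ring
  rw [hfac, norm_mul, Real.norm_of_nonneg h0.le]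
  refine mul_le_mul_of_nonneg_right ?_ h0.le
  set q := exp (-u) with hq
  have e2 : |(-1 + 2 * q - 4 / 3 * q ^ 2) * dilogExp u| ≤ u + u ^ 2 / 2 := by
    rw [abs_mul]
    have : |-1 + 2 * q - 4 / 3 * q ^ 2| ≤ 1 :=
      abs_le.2 ⟨by nlinarith, by nlinarith [sq_nonneg (q - 1)]⟩
    nlinarith [abs_nonneg (dilogExp u), abs_nonneg (-1 + 2 * q - 4 / 3 * q ^ 2)]
  have e2' := abs_le.1 e2
  have e3 : |(q - 1) * (-u / 3 - u ^ 2 / 2)| ≤ u / 3 + u ^ 2 / 2 := by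
    rw [abs_mul, abs_of_nonpos (by linarith), abs_of_nonpos (by nlinarith)]
    nlinarith
  have e3' := abs_le.1 e3
  have e4 : |(1 - q / 2) * (1 / 3 + u)| ≤ 1 / 3 + u := by
    rw [abs_mul, abs_of_nonneg (by linarith), abs_of_nonneg (by linarith)]
    nlinarith
  have e4' := abs_le.1 e4
  have h2 : q ^ 2 ≤ 1 := by nlinarith
  have h3 : 0 ≤ u ^ 2 := sq_nonneg u
  have h4 : 0 ≤ q ^ 2 := sq_nonneg q
  exact abs_le.2 ⟨by linarith, by linarith⟩

lemma integral_expIntegrand : ∫ u in Ioi (0:ℝ), expIntegrand u = π ^ 2 / 18 - 7 / 12 := by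
  have hb := integrable_bose.const_mul (1 / 3)
  have hcont : ContinuousWithinAt expPrimitive (Ici 0) 0 := by
    have := continuousOn_dilogExp 0 self_mem_Ici
    unfold expPrimitive
    fun_prop
  have h := integral_Ioi_of_hasDerivAt_of_tendsto hcont (fun u hu => hasDerivAt_expPrimitive hu)
    (integrable_expIntegrand.sub hb) tendsto_expPrimitive
  rw [integral_sub integrable_expIntegrand hb, integral_const_mul, integral_bose] at h
  have h0 : expPrimitive 0 = 7 / 12 := by
    norm_num [expPrimitive, dilogExp]
  rw [h0] at h
  linarith

lemma image_sqrt_exp_sub_one : (fun u : ℝ => √(exp u - 1)) '' Ioi 0 = Ioi 0 := by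
  ext r
  constructor
  · rintro ⟨u, hu, rfl⟩
    have := Real.one_lt_exp_iff.2 (mem_Ioi.1 hu)
    exact Real.sqrt_pos.2 (by linarith)
  · intro (hr : 0 < r)
    refine ⟨Real.log (1 + r ^ 2), Real.log_pos (by nlinarith), ?_⟩
    simp only
    rw [Real.exp_log (by positivity), add_sub_cancel_left, Real.sqrt_sq hr.le]

/-- The substitution `1 + r² = eᵘ`. -/
lemma integral_radial :
    ∫ r in Ioi (0:ℝ), r * (((r ^ 2 - 1) / (1 + r ^ 2) ^ 3) * W0 r)
      = 1 / 2 * ∫ u in Ioi (0:ℝ), expIntegrand u := by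
  have hpos {u : ℝ} (hu : u ∈ Ioi (0:ℝ)) : 0 < exp u - 1 := by
    linarith [Real.one_lt_exp_iff.2 (mem_Ioi.1 hu)]
  have hinj : InjOn (fun u : ℝ => √(exp u - 1)) (Ioi 0) := by
    intro u hu v hv h
    have := (Real.sqrt_inj (hpos hu).le (hpos hv).le).1 h
    exact Real.exp_injective (by linarith)
  have hd : ∀ u ∈ Ioi (0:ℝ), HasDerivWithinAt (fun u : ℝ => √(exp u - 1))
      (exp u / (2 * √(exp u - 1))) (Ioi 0) u := fun u hu =>
    (((Real.hasDerivAt_exp u).sub_const 1).sqrt (hpos hu).ne').hasDerivWithinAt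
  have h := integral_image_eq_integral_abs_deriv_smul measurableSet_Ioi hd hinj
    (fun r => r * (((r ^ 2 - 1) / (1 + r ^ 2) ^ 3) * W0 r))
  rw [image_sqrt_exp_sub_one] at h
  rw [h, ← integral_const_mul]
  refine setIntegral_congr_fun measurableSet_Ioi fun u hu => ?_
  have hs := Real.sqrt_pos.2 (hpos hu)
  have he := exp_pos u
  have hsq : √(exp u - 1) ^ 2 = exp u - 1 := Real.sq_sqrt (hpos hu).le
  simp only [smul_eq_mul, W0, expIntegrand]
  rw [hsq, add_sub_cancel, Real.log_exp, abs_of_pos (by positivity), Real.exp_neg]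
  change _ * (_ * (_ * (_ + _ * dilogExp u))) = _
  field_simp
  ring

theorem stmt8 :
    (∫ x : E2, ((‖x‖^2 - 1)/(1 + ‖x‖^2)^3) * W0 ‖x‖)
      = Real.pi^3/18 - 7*Real.pi/12 := by
  have h := integral_fun_norm_addHaar (volume : Measure E2)
    (fun r => ((r ^ 2 - 1) / (1 + r ^ 2) ^ 3) * W0 r)
  have hv : (volume : Measure E2).real (Metric.ball 0 1) = π := by
    simp [Measure.real, pi_pos.le]
  have hd : Module.finrank ℝ E2 = 2 := by simp
  rw [h, hv, hd]
  simp only [Nat.add_one_sub_one, pow_one, smul_eq_mul]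
  rw [integral_radial, integral_expIntegrand]
  simp only [nsmul_eq_mul]
  push_cast
  ring
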